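/- arXiv:2303.03465 — 2 statements merged into one kernel-verified Lean document; each statement's English description precedes it below -/
import Mathlib

section
/- Let n₁, n₂ ≥ 1 and let U be a unitary complex matrix acting on ℂ^{n₁} ⊗ ℂ^{n₂}. Assume that for every finite family (P_x)_{x∈F} of mutually orthogonal orthogonal-projection matrices on ℂ^{n₁} with Σ_{x∈F} P_x = I_{n₁}, and for every density matrix ρ on ℂ^{n₁} ⊗ ℂ^{n₂}, one has Tr₁( Σ_{x∈F} U (P_x ⊗ I_{n₂}) ρ (P_x ⊗ I_{n₂}) U* ) = Tr₁( U ρ U* ). Then there exist unitary matrices U₁ ∈ M_{n₁}(ℂ) and U₂ ∈ M_{n₂}(ℂ) such that U = U₁ ⊗ U₂. (This is the paper's theorem that the measurement-consistency condition (MC) implies the factorization property (F).) -/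
open Matrix Kronecker BigOperators
open scoped ComplexOrder

/-- Partial trace over the first tensor factor:
the unique linear map with `trFst (A ⊗ₖ B) = Tr(A) • B`. -/
noncomputable def trFst {n₁ n₂ : ℕ} (A : Matrix (Fin n₁ × Fin n₂) (Fin n₁ × Fin n₂) ℂ) :
    Matrix (Fin n₂) (Fin n₂) ℂ :=
  fun i j => ∑ k : Fin n₁, A (k, i) (k, j)

/-!
A projection `P` on the first factor gives the two-outcome measurement `{P, 1 - P}`. In the
Heisenberg picture, that it leaves the reduced state of the second factor unchanged says that
every observable `X = U* (1 ⊗ B) U` with `B` Hermitian is fixed by the pinching with `P ⊗ 1`, that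
is, commutes with `P ⊗ 1`. Since projections generate the full matrix algebra, `U* (1 ⊗ B) U` lies
in the commutant of the first factor, i.e. in the second factor, for every matrix `B`. Write `u`
and `v` for the block matrices of `U` and `U*`. Then `1 ⊗ B` passes through `u` and back through
`v`, so every product `u i k * v k' i'` of blocks is central, hence scalar. As `u v = 1`, one of
these products is nonzero, which makes all blocks of `U` scalar multiples of one matrix, so
`U = A ⊗ W`. Unitarity of `U` forces `A A*` and `W W*` to be inverse positive scalars, and
rescaling finishes.
-/

section StarProjections

variable {n R S : Type*} [Fintype n] [DecidableEq n] [CommRing R] [StarRing R] [Semiring S]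
  [Algebra R S]

lemma isStarProjection_single_one (i : n) : IsStarProjection (single i i (1 : R)) :=
  ⟨by simp [IsIdempotentElem], by simp [isSelfAdjoint_iff, star_eq_conjTranspose]⟩

lemma isStarProjection_invOf_two_smul_single [Invertible (2 : R)] {i j : n} (hij : i ≠ j) :
    IsStarProjection
      (⅟(2 : R) • (single i i 1 + single i j 1 + single j i 1 + single j j 1) : Matrix n n R) where
  isIdempotentElem := by
    have hsq : (single i i 1 + single i j 1 + single j i 1 + single j j 1 : Matrix n n R) *
        (single i i 1 + single i j 1 + single j i 1 + single j j 1) =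
          (2 : R) • (single i i 1 + single i j 1 + single j i 1 + single j j 1) := by
      simp only [mul_add, add_mul, single_mul_single_same, single_mul_single_of_ne _ _ _ _ hij,
        single_mul_single_of_ne _ _ _ _ hij.symm, mul_one]
      module
    rw [IsIdempotentElem, smul_mul_smul_comm, hsq, smul_smul, mul_assoc, invOf_mul_self, mul_one]
  isSelfAdjoint := by
    have hhalf : IsSelfAdjoint (⅟(2 : R)) := (IsSelfAdjoint.ofNat 2).invOf
    simp only [isSelfAdjoint_iff, star_smul, star_add, star_eq_conjTranspose,
      conjTranspose_single, star_one, hhalf.star_eq]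
    module

lemma single_one_mem_adjoin_isStarProjection [Invertible (2 : R)] (i j : n) :
    single i j (1 : R) ∈ Algebra.adjoin R {P : Matrix n n R | IsStarProjection P} := by
  obtain rfl | hij := eq_or_ne i j
  · exact Algebra.subset_adjoin (isStarProjection_single_one i)
  -- The projection onto the span of `eᵢ + eⱼ` has `(i, j)` entry `1 / 2`.
  · have compression : single i j (1 : R) = (2 : R) • (single i i 1 *
        (⅟(2 : R) • (single i i 1 + single i j 1 + single j i 1 + single j j 1)) *
          single j j 1) := by
      simp [mul_add, add_mul, hij]
    rw [compression]
    exact Subalgebra.smul_mem _ (mul_mem (mul_mem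
      (Algebra.subset_adjoin (isStarProjection_single_one i))
      (Algebra.subset_adjoin (isStarProjection_invOf_two_smul_single hij)))
      (Algebra.subset_adjoin (isStarProjection_single_one j))) _

theorem adjoin_isStarProjection_eq_top [Invertible (2 : R)] :
    Algebra.adjoin R {P : Matrix n n R | IsStarProjection P} = ⊤ := by
  refine eq_top_iff.mpr fun A _ ↦ ?_
  rw [matrix_eq_sum_single A]
  refine sum_mem fun i _ ↦ sum_mem fun j _ ↦ ?_
  simpa [smul_single] using
    Subalgebra.smul_mem _ (single_one_mem_adjoin_isStarProjection i j) (A i j)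

lemma commute_map_of_forall_isStarProjection [Invertible (2 : R)] (f : Matrix n n R →ₐ[R] S)
    {x : S} (h : ∀ P, IsStarProjection P → Commute (f P) x) (A : Matrix n n R) :
    Commute (f A) x := by
  have hle : Algebra.adjoin R {P : Matrix n n R | IsStarProjection P} ≤
      (Subalgebra.centralizer R {x}).comap f :=
    Algebra.adjoin_le fun P hP ↦ by
      rintro _ rfl
      exact (h P hP).symm
  rw [adjoin_isStarProjection_eq_top] at hle
  exact (hle (Algebra.mem_top (x := A)) x rfl).symm

end StarProjections

section Pinching

/-- The pinching `x ↦ p x p + (1 - p) x (1 - p)`: for a projection `p`, the effect on a state `x`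
of the non-selective measurement with outcomes `p` and `1 - p`. -/
def pinching {R : Type*} [Ring R] (p x : R) : R :=
  p * x * p + (1 - p) * x * (1 - p)

lemma commute_of_pinching_eq_self {R : Type*} [Ring R] {p x : R} (hp : IsIdempotentElem p)
    (h : pinching p x = x) : Commute p x := by
  have hleft : p * pinching p x = p * x * p := by
    simp [pinching, mul_add, ← mul_assoc, hp.eq, hp.mul_one_sub_self]
  have hright : pinching p x * p = p * x * p := by
    simp [pinching, add_mul, mul_assoc, hp.eq, hp.one_sub_mul_self]
  rw [h] at hleft hright
  exact hleft.trans hright.symm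

lemma isSelfAdjoint_pinching {R : Type*} [Ring R] [StarRing R] {p x : R} (hp : IsSelfAdjoint p)
    (hx : IsSelfAdjoint x) : IsSelfAdjoint (pinching p x) := by
  simp [pinching, isSelfAdjoint_iff, hp.star_eq, hx.star_eq, mul_assoc]

lemma trace_mul_pinching {n R : Type*} [Fintype n] [DecidableEq n] [CommRing R]
    (A P B : Matrix n n R) : trace (A * pinching P B) = trace (pinching P A * B) := by
  simp only [pinching, mul_add, add_mul, trace_add]
  congr 1 <;> rw [← mul_assoc, trace_mul_comm] <;> simp only [mul_assoc]

end Pinching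

section DensityMatrices

variable {n 𝕜 : Type*} [Fintype n] [RCLike 𝕜]

lemma eq_zero_of_forall_trace_mul_posSemidef {A : Matrix n n 𝕜} (hA : A.IsHermitian)
    (h : ∀ B : Matrix n n 𝕜, B.PosSemidef → trace (A * B) = 0) : A = 0 := by
  classical
  -- `A` is not available as a test matrix, but `A²` and `(A + 1)²` are, and
  -- `A (A + 1)² = A A² + 2 A² + A` isolates `trace (A²)`.
  have h_one : trace A = 0 := by simpa using h 1 .one
  have h_sq := h _ (posSemidef_conjTranspose_mul_self A)
  have h_shifted := h _ (posSemidef_conjTranspose_mul_self (A + 1))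
  have expand : A * ((A + 1)ᴴ * (A + 1)) = A * (Aᴴ * A) + (2 : 𝕜) • (Aᴴ * A) + A := by
    rw [conjTranspose_add, conjTranspose_one, hA.eq, two_smul]
    noncomm_ring
  rw [expand, trace_add, trace_add, h_sq, h_one, trace_smul] at h_shifted
  exact trace_conjTranspose_mul_self_eq_zero_iff.mp (by simpa using h_shifted)

lemma trace_mul_eq_zero_of_forall_density {A : Matrix n n 𝕜}
    (h : ∀ ρ : Matrix n n 𝕜, ρ.PosSemidef → ρ.trace = 1 → trace (A * ρ) = 0)
    {B : Matrix n n 𝕜} (hB : B.PosSemidef) : trace (A * B) = 0 := by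
  obtain htr | htr := eq_or_ne (trace B) 0
  · simp [hB.trace_eq_zero_iff.mp htr]
  · have := h ((trace B)⁻¹ • B) (hB.smul (inv_nonneg.mpr hB.trace_nonneg)) (by simp [htr])
    simpa [htr] using this

theorem eq_of_forall_trace_mul_density {A B : Matrix n n 𝕜} (hA : A.IsHermitian)
    (hB : B.IsHermitian)
    (h : ∀ ρ : Matrix n n 𝕜, ρ.PosSemidef → ρ.trace = 1 → trace (A * ρ) = trace (B * ρ)) :
    A = B :=
  sub_eq_zero.mp <| eq_zero_of_forall_trace_mul_posSemidef (hA.sub hB) fun _ ↦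
    trace_mul_eq_zero_of_forall_density fun ρ hρ htr ↦ by
      rw [sub_mul, trace_sub, h ρ hρ htr, sub_self]

end DensityMatrices

section TensorFactors

variable {m n R : Type*}

/-- The embedding `A ↦ A ⊗ 1` of the observables of the first factor into those of the composite
system. -/
def includeFst (m n R : Type*) [Fintype m] [Fintype n] [DecidableEq m] [DecidableEq n]
    [CommSemiring R] [StarRing R] : Matrix m m R →⋆ₐ[R] Matrix (m × n) (m × n) R where
  toFun A := A ⊗ₖ 1
  map_one' := one_kronecker_one
  map_mul' A B := by rw [← mul_kronecker_mul, one_mul]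
  map_zero' := zero_kronecker _
  map_add' A B := add_kronecker A B 1
  commutes' r := by simp [Algebra.algebraMap_eq_smul_one, smul_kronecker]
  map_star' A := by simp [star_eq_conjTranspose, conjTranspose_kronecker]

/-- The embedding `B ↦ 1 ⊗ B` of the observables of the second factor into those of the composite
system. -/
def includeSnd (m n R : Type*) [Fintype m] [Fintype n] [DecidableEq m] [DecidableEq n]
    [CommSemiring R] [StarRing R] : Matrix n n R →⋆ₐ[R] Matrix (m × n) (m × n) R where
  toFun B := 1 ⊗ₖ B
  map_one' := one_kronecker_one
  map_mul' A B := by rw [← mul_kronecker_mul, one_mul]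
  map_zero' := kronecker_zero _
  map_add' A B := kronecker_add 1 A B
  commutes' r := by simp [Algebra.algebraMap_eq_smul_one, kronecker_smul]
  map_star' A := by simp [star_eq_conjTranspose, conjTranspose_kronecker]

/-- The partial trace over the first tensor factor, for matrices with arbitrary index types and
coefficients; `trFst` is the case of complex matrices indexed by `Fin n₁ × Fin n₂`. -/
def partialTraceFst [Fintype m] [AddCommMonoid R] (A : Matrix (m × n) (m × n) R) :
    Matrix n n R :=
  fun i j ↦ ∑ k, A (k, i) (k, j)

lemma trace_mul_partialTraceFst [Fintype m] [DecidableEq m] [Fintype n] [Semiring R]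
    (B : Matrix n n R) (A : Matrix (m × n) (m × n) R) :
    trace (B * partialTraceFst A) = trace ((1 ⊗ₖ B) * A) := by
  simp only [trace, diag, mul_apply, partialTraceFst, Fintype.sum_prod_type, kroneckerMap_apply,
    one_apply, ite_mul, one_mul, zero_mul, Finset.mul_sum]
  simp only [Finset.sum_comm (s := (Finset.univ : Finset m)), Finset.sum_ite_eq,
    Finset.mem_univ, if_true]

lemma comp_symm_one_kronecker [Fintype m] [DecidableEq m] [Fintype n] [DecidableEq n] [Semiring R]
    (B : Matrix n n R) : (comp m m n n R).symm (1 ⊗ₖ B) = scalar m B := by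
  ext i k j l
  by_cases h : i = k <;> simp [h, one_apply]

lemma comp_symm_single_kronecker_one [DecidableEq m] [DecidableEq n] [Semiring R] (i k : m) :
    (comp m m n n R).symm (single i k 1 ⊗ₖ 1) = single i k 1 := by
  ext i' k' j l
  by_cases h : i = i' ∧ k = k' <;> simp [single, h]

theorem exists_eq_one_kronecker_of_commute [Fintype m] [DecidableEq m] [Fintype n] [DecidableEq n]
    [Semiring R] {X : Matrix (m × n) (m × n) R} (h : ∀ A : Matrix m m R, Commute (A ⊗ₖ 1) X) :
    ∃ B : Matrix n n R, X = 1 ⊗ₖ B := by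
  obtain ⟨B, hB⟩ := mem_range_scalar_of_commute_single (M := (comp m m n n R).symm X)
    fun i k _ ↦ by
      simpa [comp_symm_single_kronecker_one] using
        (h (single i k 1)).map (compRingEquiv m n R).symm
  exact ⟨B, (comp m m n n R).symm.injective (by rw [comp_symm_one_kronecker, hB])⟩

lemma exists_eq_smul_one_of_kronecker_eq_one {K : Type*} [Field K] [DecidableEq m]
    [DecidableEq n] [Nonempty m] [Nonempty n] {A : Matrix m m K} {B : Matrix n n K}
    (h : A ⊗ₖ B = 1) :
    ∃ c : K, c ≠ 0 ∧ A = c • 1 ∧ B = c⁻¹ • 1 := by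
  have hentry (i k j l) : A i k * B j l = (1 : Matrix (m × n) (m × n) K) (i, j) (k, l) :=
    congr($h (i, j) (k, l))
  obtain ⟨i₀⟩ := ‹Nonempty m›
  obtain ⟨j₀⟩ := ‹Nonempty n›
  have hone : A i₀ i₀ * B j₀ j₀ = 1 := by simp [hentry]
  have hA₀ : A i₀ i₀ ≠ 0 := left_ne_zero_of_mul_eq_one hone
  have hB (j l) : B j l = (A i₀ i₀)⁻¹ * (1 : Matrix n n K) j l := by
    rw [eq_inv_mul_iff_mul_eq₀ hA₀, hentry]
    simp [one_apply]
  refine ⟨A i₀ i₀, hA₀, ?_, Matrix.ext hB⟩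
  ext i k
  have := hentry i k j₀ j₀
  rw [hB, one_apply_eq, mul_one, ← div_eq_mul_inv, div_eq_iff hA₀] at this
  simp [this, one_apply, mul_comm]

end TensorFactors

section Factorization

variable {m n : Type*} [Fintype m] [DecidableEq m] [Fintype n] [DecidableEq n]

lemma mul_apply_mem_center_of_intertwining {R : Type*} [Semiring R] {u v : Matrix m m R}
    (h : ∀ b : R, ∃ c : R, scalar m b * u = u * scalar m c ∧ scalar m c * v = v * scalar m b)
    (i k k' i' : m) : u i k * v k' i' ∈ Set.center R := by
  refine Semigroup.mem_center_iff.mpr fun b ↦ ?_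
  obtain ⟨c, hu, hv⟩ := h b
  have hu_entry : b * u i k = u i k * c := by simpa using congr($hu i k)
  have hv_entry : c * v k' i' = v k' i' * b := by simpa using congr($hv k' i')
  rw [← mul_assoc, hu_entry, mul_assoc, hv_entry, mul_assoc]

lemma exists_mul_apply_ne_zero {R : Type*} [Semiring R] [Nontrivial R] [Nonempty m]
    {u v : Matrix m m R} (huv : u * v = 1) : ∃ i k, u i k * v k i ≠ 0 := by
  obtain ⟨i⟩ := ‹Nonempty m›
  have hsum : ∑ k, u i k * v k i ≠ 0 := by simp [← mul_apply, huv]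
  obtain ⟨k, -, hk⟩ := Finset.exists_ne_zero_of_sum_ne_zero hsum
  exact ⟨i, k, hk⟩

lemma exists_eq_smul_of_mul_apply_mem_center {K : Type*} [Field K] [Nonempty m] [Nonempty n]
    {u v : Matrix m m (Matrix n n K)} (huv : u * v = 1)
    (h : ∀ i k k' i', u i k * v k' i' ∈ Set.center (Matrix n n K)) :
    ∃ (A : Matrix m m K) (W : Matrix n n K), ∀ i k, u i k = A i k • W := by
  have hscalar (i k k' i') : ∃ c : K, u i k * v k' i' = c • 1 := by
    obtain ⟨c, hc⟩ := center_eq_range (R := K) (n := n) ▸ h i k k' i'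
    exact ⟨c, by rw [← hc, scalar_apply, smul_one_eq_diagonal]⟩
  choose c hc using hscalar
  obtain ⟨i₀, k₀, hne⟩ := exists_mul_apply_ne_zero huv
  have hc₀ : c i₀ k₀ k₀ i₀ ≠ 0 := fun h₀ ↦ hne (by rw [hc, h₀, zero_smul])
  have hinv : v k₀ i₀ * ((c i₀ k₀ k₀ i₀)⁻¹ • u i₀ k₀) = 1 :=
    mul_eq_one_comm.mp (by rw [smul_mul_assoc, hc, inv_smul_smul₀ hc₀])
  refine ⟨of fun i k ↦ c i k k₀ i₀, (c i₀ k₀ k₀ i₀)⁻¹ • u i₀ k₀, fun i k ↦ ?_⟩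
  calc u i k = u i k * (v k₀ i₀ * ((c i₀ k₀ k₀ i₀)⁻¹ • u i₀ k₀)) := by rw [hinv, mul_one]
    _ = c i k k₀ i₀ • ((c i₀ k₀ k₀ i₀)⁻¹ • u i₀ k₀) := by
      rw [← mul_assoc, hc, smul_one_mul]

theorem exists_eq_kronecker_of_conj_one_kronecker {K : Type*} [Field K] [Nonempty m] [Nonempty n]
    {U V : Matrix (m × n) (m × n) K} (hUV : U * V = 1)
    (h : ∀ B : Matrix n n K, ∃ C : Matrix n n K, V * (1 ⊗ₖ B) * U = 1 ⊗ₖ C) :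
    ∃ (A : Matrix m m K) (W : Matrix n n K), U = A ⊗ₖ W := by
  let blocks := (compRingEquiv m n K).symm
  have hblocks (B : Matrix n n K) : blocks (1 ⊗ₖ B) = scalar m B := comp_symm_one_kronecker B
  have hintertwine (B : Matrix n n K) : ∃ C : Matrix n n K,
      scalar m B * blocks U = blocks U * scalar m C ∧
        scalar m C * blocks V = blocks V * scalar m B := by
    obtain ⟨C, hC⟩ := h B
    refine ⟨C, ?_, ?_⟩ <;> rw [← hblocks, ← hblocks, ← map_mul, ← map_mul, ← hC]
    · simp only [← mul_assoc, hUV, one_mul]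
    · simp only [mul_assoc, hUV, mul_one]
  obtain ⟨A, W, hAW⟩ := exists_eq_smul_of_mul_apply_mem_center
    (by rw [← map_mul, hUV, map_one]) (mul_apply_mem_center_of_intertwining hintertwine)
  exact ⟨A, W, Matrix.ext fun ⟨i, j⟩ ⟨k, l⟩ ↦ congr($(hAW i k) j l)⟩

theorem exists_unitary_kronecker_eq {𝕜 : Type*} [RCLike 𝕜] [Nonempty m] [Nonempty n]
    {A : Matrix m m 𝕜} {B : Matrix n n 𝕜} (h : A ⊗ₖ B ∈ unitaryGroup (m × n) 𝕜) :
    ∃ U₁ ∈ unitaryGroup m 𝕜, ∃ U₂ ∈ unitaryGroup n 𝕜, A ⊗ₖ B = U₁ ⊗ₖ U₂ := by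
  rw [mem_unitaryGroup_iff, star_eq_conjTranspose, conjTranspose_kronecker,
    ← mul_kronecker_mul] at h
  obtain ⟨c, hc, hA, hB⟩ := exists_eq_smul_one_of_kronecker_eq_one h
  have hc_nonneg : 0 ≤ c := by
    simpa [hA] using (posSemidef_self_mul_conjTranspose A).diag_nonneg (i := Classical.arbitrary m)
  obtain ⟨r, hr, rfl⟩ := RCLike.nonneg_iff_exists_ofReal.mp hc_nonneg
  have hs : ((√r : ℝ) : 𝕜) * (√r : ℝ) = r := by rw [← RCLike.ofReal_mul, Real.mul_self_sqrt hr]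
  have hs₀ : ((√r : ℝ) : 𝕜) ≠ 0 := fun h₀ ↦ hc (by rw [← hs, h₀, zero_mul])
  refine ⟨((√r : ℝ) : 𝕜)⁻¹ • A, ?_, ((√r : ℝ) : 𝕜) • B, ?_, ?_⟩
  · rw [mem_unitaryGroup_iff, star_smul, smul_mul_smul_comm, star_eq_conjTranspose, hA, smul_smul]
    simp [← mul_inv, hs, hc]
  · rw [mem_unitaryGroup_iff, star_smul, smul_mul_smul_comm, star_eq_conjTranspose, hB, smul_smul]
    simp [hs, hc]
  · rw [smul_kronecker, kronecker_smul, inv_smul_smul₀ hs₀]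

end Factorization

section MeasurementConsistency

variable {m n 𝕜 : Type*} [Fintype m] [DecidableEq m] [Fintype n] [DecidableEq n] [RCLike 𝕜]
  {U : Matrix (m × n) (m × n) 𝕜}

lemma mul_pinching_kronecker_one_mul (P : Matrix m m 𝕜) (ρ V : Matrix (m × n) (m × n) 𝕜) :
    U * pinching (P ⊗ₖ 1) ρ * V =
      U * (P ⊗ₖ 1) * ρ * (P ⊗ₖ 1) * V + U * ((1 - P) ⊗ₖ 1) * ρ * ((1 - P) ⊗ₖ 1) * V := by
  have hcompl : (1 - P) ⊗ₖ (1 : Matrix n n 𝕜) = 1 - P ⊗ₖ 1 :=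
    (map_sub (includeFst m n 𝕜) 1 P).trans (by rw [map_one]; rfl)
  simp only [pinching, hcompl, mul_add, add_mul, mul_assoc]

lemma commute_kronecker_one_of_partialTraceFst_pinching {P : Matrix m m 𝕜}
    (hP : IsStarProjection P)
    (h : ∀ ρ : Matrix (m × n) (m × n) 𝕜, ρ.PosSemidef → ρ.trace = 1 →
      partialTraceFst (U * pinching (P ⊗ₖ 1) ρ * Uᴴ) = partialTraceFst (U * ρ * Uᴴ))
    {B : Matrix n n 𝕜} (hB : B.IsHermitian) : Commute (P ⊗ₖ 1) (Uᴴ * (1 ⊗ₖ B) * U) := by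
  have hP' : IsStarProjection (P ⊗ₖ (1 : Matrix n n 𝕜)) := hP.map (includeFst m n 𝕜)
  have hX : (Uᴴ * (1 ⊗ₖ B) * U).IsHermitian :=
    isHermitian_conjTranspose_mul_mul U (IsSelfAdjoint.map hB (includeSnd m n 𝕜))
  have heisenberg (σ : Matrix (m × n) (m × n) 𝕜) :
      trace (B * partialTraceFst (U * σ * Uᴴ)) = trace (Uᴴ * (1 ⊗ₖ B) * U * σ) := by
    rw [trace_mul_partialTraceFst, ← mul_assoc, trace_mul_comm]
    simp only [mul_assoc]
  refine commute_of_pinching_eq_self hP'.isIdempotentElem <| eq_of_forall_trace_mul_density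
    (isSelfAdjoint_pinching hP'.isSelfAdjoint hX) hX fun ρ hρ htr ↦ ?_
  rw [← trace_mul_pinching, ← heisenberg, ← heisenberg, h ρ hρ htr]

theorem exists_conj_one_kronecker_eq_of_partialTraceFst_pinching (hU : U ∈ unitaryGroup (m × n) 𝕜)
    (h : ∀ P : Matrix m m 𝕜, IsStarProjection P →
      ∀ ρ : Matrix (m × n) (m × n) 𝕜, ρ.PosSemidef → ρ.trace = 1 →
        partialTraceFst (U * pinching (P ⊗ₖ 1) ρ * Uᴴ) = partialTraceFst (U * ρ * Uᴴ))
    (B : Matrix n n 𝕜) : ∃ C : Matrix n n 𝕜, Uᴴ * (1 ⊗ₖ B) * U = 1 ⊗ₖ C := by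
  let _ : Invertible (2 : 𝕜) := invertibleOfNonzero two_ne_zero
  let heisenberg : Matrix n n 𝕜 →ₐ[𝕜] Matrix (m × n) (m × n) 𝕜 :=
    ((Unitary.conjStarAlgAut 𝕜 _ (star ⟨U, hU⟩)).toStarAlgHom.comp (includeSnd m n 𝕜)).toAlgHom
  have heisenberg_apply (B : Matrix n n 𝕜) : heisenberg B = Uᴴ * (1 ⊗ₖ B) * U := by
    simp [heisenberg, includeSnd, star_eq_conjTranspose]
  refine exists_eq_one_kronecker_of_commute fun A ↦ ?_
  rw [← heisenberg_apply]
  refine (commute_map_of_forall_isStarProjection heisenberg (fun Q hQ ↦ ?_) B).symm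
  refine (commute_map_of_forall_isStarProjection (includeFst m n 𝕜).toAlgHom (fun P hP ↦ ?_) A).symm
  rw [heisenberg_apply]
  exact commute_kronecker_one_of_partialTraceFst_pinching hP (h P hP) hQ.isSelfAdjoint

end MeasurementConsistency

theorem mc_implies_factorization_general {m n 𝕜 : Type*} [Fintype m] [DecidableEq m] [Fintype n]
    [DecidableEq n] [RCLike 𝕜] {U : Matrix (m × n) (m × n) 𝕜} (hU : U ∈ unitaryGroup (m × n) 𝕜)
    (hMC : ∀ P : Bool → Matrix m m 𝕜, (∀ x, (P x)ᴴ = P x) → (∀ x, P x * P x = P x) →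
      (∀ x y, x ≠ y → P x * P y = 0) → ∑ x, P x = 1 →
      ∀ ρ : Matrix (m × n) (m × n) 𝕜, ρ.PosSemidef → ρ.trace = 1 →
        partialTraceFst (∑ x, U * (P x ⊗ₖ (1 : Matrix n n 𝕜)) * ρ *
            (P x ⊗ₖ (1 : Matrix n n 𝕜)) * Uᴴ) = partialTraceFst (U * ρ * Uᴴ)) :
    ∃ (U₁ : Matrix m m 𝕜) (U₂ : Matrix n n 𝕜),
      U₁ ∈ unitaryGroup m 𝕜 ∧ U₂ ∈ unitaryGroup n 𝕜 ∧ U = U₁ ⊗ₖ U₂ := by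
  obtain hmn | hmn := isEmpty_or_nonempty (m × n)
  · exact ⟨1, 1, one_mem _, one_mem _, Subsingleton.elim _ _⟩
  obtain ⟨_, _⟩ := nonempty_prod.mp hmn
  obtain ⟨A, W, rfl⟩ := exists_eq_kronecker_of_conj_one_kronecker (mem_unitaryGroup_iff.mp hU) <|
    exists_conj_one_kronecker_eq_of_partialTraceFst_pinching hU fun P hP ρ hρ htr ↦ by
      have hP_idem : P * P = P := hP.isIdempotentElem
      have hP_star : Pᴴ = P := hP.isSelfAdjoint
      rw [← hMC (fun b ↦ bif b then P else 1 - P) (by rintro (_ | _) <;> simp [hP_star])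
        (by rintro (_ | _) <;> simp [hP_idem, mul_sub, sub_mul])
        (by rintro (_ | _) (_ | _) <;> simp [hP_idem, mul_sub, sub_mul]) (by simp) ρ hρ htr,
        mul_pinching_kronecker_one_mul, Fintype.sum_bool]
      rfl
  obtain ⟨U₁, hU₁, U₂, hU₂, hfac⟩ := exists_unitary_kronecker_eq hU
  exact ⟨U₁, U₂, hU₁, hU₂, hfac⟩

/-- (MC) ⇒ (F): if a unitary `U` on `ℂ^{n₁} ⊗ ℂ^{n₂}` is such that, for every ideal
projective (non-selective) measurement on the first factor and every density matrix,
the reduced state of the second subsystem after the evolution `U` is unchanged,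
then `U` factorizes as a Kronecker product of unitaries. -/
theorem mc_implies_factorization (n₁ n₂ : ℕ) (hn₁ : 1 ≤ n₁) (hn₂ : 1 ≤ n₂)
    (U : Matrix (Fin n₁ × Fin n₂) (Fin n₁ × Fin n₂) ℂ)
    (hU : U ∈ Matrix.unitaryGroup (Fin n₁ × Fin n₂) ℂ)
    (hMC : ∀ (ι : Type) [Fintype ι] (P : ι → Matrix (Fin n₁) (Fin n₁) ℂ),
      (∀ x, (P x)ᴴ = P x) → (∀ x, P x * P x = P x) →
      (∀ x y, x ≠ y → P x * P y = 0) → (∑ x, P x) = 1 →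
      ∀ ρ : Matrix (Fin n₁ × Fin n₂) (Fin n₁ × Fin n₂) ℂ, ρ.PosSemidef → ρ.trace = 1 →
        trFst (∑ x, U * (P x ⊗ₖ (1 : Matrix (Fin n₂) (Fin n₂) ℂ)) * ρ *
            (P x ⊗ₖ (1 : Matrix (Fin n₂) (Fin n₂) ℂ)) * Uᴴ)
          = trFst (U * ρ * Uᴴ)) :
    ∃ (U₁ : Matrix (Fin n₁) (Fin n₁) ℂ) (U₂ : Matrix (Fin n₂) (Fin n₂) ℂ),
      U₁ ∈ Matrix.unitaryGroup (Fin n₁) ℂ ∧ U₂ ∈ Matrix.unitaryGroup (Fin n₂) ℂ ∧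
      U = U₁ ⊗ₖ U₂ :=
  mc_implies_factorization_general hU (hMC Bool)
end

section
/- Let n₁, n₂ ≥ 1 and let A ∈ M_{n₁}(ℂ), B ∈ M_{n₂}(ℂ) be nonzero matrices such that the Kronecker product A ⊗ B is unitary. Then there exists a nonzero scalar c ∈ ℂ such that c·A and c⁻¹·B are both unitary; in particular there exist unitary matrices U₁ ∈ M_{n₁}(ℂ) and U₂ ∈ M_{n₂}(ℂ) with A ⊗ B = U₁ ⊗ U₂. (The final step of the theorem (MC) ⇒ (F): once the joint evolution operator is shown to be a pure tensor, its factors can be identified with unitary evolution operators of the subsystems.) -/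
open Matrix Kronecker BigOperators

/-!
Unitarity of `A ⊗ B` says `(A Aᴴ) ⊗ (B Bᴴ) = 1`. A Kronecker product of square matrices equals the
identity only if its factors are mutually inverse scalar matrices, so `A Aᴴ = u` and `B Bᴴ = u⁻¹`
for some scalar `u`. Since `A Aᴴ` is positive semidefinite, `u` is nonnegative and hence of the form
`d * star d`; then `c = d⁻¹` normalizes both factors at once.
-/

section

variable {m n : Type*} [DecidableEq m] [DecidableEq n]

theorem exists_units_smul_one_of_kronecker_eq_one {R : Type*} [CommMonoidWithZero R]
    [Nonempty m] [Nonempty n] {P : Matrix m m R} {Q : Matrix n n R} (h : P ⊗ₖ Q = 1) :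
    ∃ u : Rˣ, P = (u : R) • 1 ∧ Q = (↑u⁻¹ : R) • 1 := by
  obtain ⟨a⟩ := ‹Nonempty m›
  obtain ⟨b⟩ := ‹Nonempty n›
  have entry (i j k l) : P i j * Q k l = (1 : Matrix (m × n) (m × n) R) (i, k) (j, l) := by
    rw [← h, kronecker_apply]
  have hab : P a a * Q b b = 1 := by rw [entry, one_apply_eq]
  obtain ⟨u, hu⟩ : ∃ u : Rˣ, (u : R) = P a a ∧ (↑u⁻¹ : R) = Q b b :=
    ⟨.mkOfMulEqOne _ _ hab, rfl, rfl⟩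
  refine ⟨u, ?_, ?_⟩
  · ext i j
    calc P i j = u * (P i j * Q b b) := by rw [← hu.2, mul_left_comm, u.mul_inv, mul_one]
      _ = u • (1 : Matrix m m R) i j := by simp [entry, one_apply, Units.smul_def]
  · ext k l
    calc Q k l = ↑u⁻¹ * (P a a * Q k l) := by rw [← hu.1, u.inv_mul_cancel_left]
      _ = u⁻¹ • (1 : Matrix n n R) k l := by simp [entry, one_apply, Units.smul_def]

variable [Fintype m] [Fintype n]

theorem smul_mem_unitaryGroup_of_mul_star_eq_smul_one {R : Type*} [CommRing R] [StarRing R]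
    {A : Matrix m m R} {c u : R} (hA : A * star A = u • 1) (hc : c * star c * u = 1) :
    c • A ∈ unitaryGroup m R := by
  rw [mem_unitaryGroup_iff, star_smul, smul_mul_smul_comm, hA, smul_smul, hc, one_smul]

theorem nonneg_of_mul_star_eq_smul_one {R : Type*} [Ring R] [PartialOrder R] [StarRing R]
    [StarOrderedRing R] [Nonempty m] {A : Matrix m m R} {u : R} (hA : A * star A = u • 1) :
    0 ≤ u := by
  obtain ⟨a⟩ := ‹Nonempty m›
  have hpos : 0 ≤ (A * star A) a a := (posSemidef_self_mul_conjTranspose A).diag_nonneg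
  simpa [hA] using hpos

variable {𝕜 : Type*} [RCLike 𝕜]

open scoped ComplexOrder in
theorem exists_mul_star_eq_of_nonneg {u : 𝕜} (hu : 0 ≤ u) : ∃ d : 𝕜, d * star d = u := by
  obtain ⟨r, hr, rfl⟩ := RCLike.nonneg_iff_exists_ofReal.mp hu
  exact ⟨(√r : ℝ), by simp [← RCLike.ofReal_mul, Real.mul_self_sqrt hr]⟩

open scoped ComplexOrder in
theorem kronecker_unitary_factors_general [Nonempty m] [Nonempty n]
    {A : Matrix m m 𝕜} {B : Matrix n n 𝕜} (hAB : A ⊗ₖ B ∈ unitaryGroup (m × n) 𝕜) :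
    ∃ c : 𝕜, c ≠ 0 ∧ c • A ∈ unitaryGroup m 𝕜 ∧ c⁻¹ • B ∈ unitaryGroup n 𝕜 ∧
      ∃ (U₁ : Matrix m m 𝕜) (U₂ : Matrix n n 𝕜),
        U₁ ∈ unitaryGroup m 𝕜 ∧ U₂ ∈ unitaryGroup n 𝕜 ∧ A ⊗ₖ B = U₁ ⊗ₖ U₂ := by
  have hone : (A * star A) ⊗ₖ (B * star B) = 1 := by
    rw [mul_kronecker_mul, star_eq_conjTranspose, star_eq_conjTranspose,
      ← conjTranspose_kronecker]
    exact mem_unitaryGroup_iff.mp hAB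
  obtain ⟨u, hA, hB⟩ := exists_units_smul_one_of_kronecker_eq_one hone
  obtain ⟨d, hd⟩ := exists_mul_star_eq_of_nonneg (nonneg_of_mul_star_eq_smul_one hA)
  have hd₀ : d ≠ 0 := left_ne_zero_of_mul (hd ▸ u.ne_zero)
  have hU₁ : d⁻¹ • A ∈ unitaryGroup m 𝕜 :=
    smul_mem_unitaryGroup_of_mul_star_eq_smul_one hA <| by
      rw [star_inv₀, ← mul_inv, hd, inv_mul_cancel₀ u.ne_zero]
  have hU₂ : d • B ∈ unitaryGroup n 𝕜 :=
    smul_mem_unitaryGroup_of_mul_star_eq_smul_one hB <| by rw [hd, u.mul_inv]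
  refine ⟨d⁻¹, inv_ne_zero hd₀, hU₁, by rwa [inv_inv], _, _, hU₁, hU₂, ?_⟩
  rw [smul_kronecker, kronecker_smul, inv_smul_smul₀ hd₀]

end

/-- If a Kronecker product `A ⊗ B` of nonzero matrices is unitary, then there is a
nonzero scalar `c` such that `c • A` and `c⁻¹ • B` are unitary; in particular
`A ⊗ B = U₁ ⊗ U₂` for some unitaries `U₁, U₂`. -/
theorem kronecker_unitary_factors (n₁ n₂ : ℕ) (hn₁ : 1 ≤ n₁) (hn₂ : 1 ≤ n₂)
    (A : Matrix (Fin n₁) (Fin n₁) ℂ) (B : Matrix (Fin n₂) (Fin n₂) ℂ)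
    (hA : A ≠ 0) (hB : B ≠ 0)
    (hAB : A ⊗ₖ B ∈ Matrix.unitaryGroup (Fin n₁ × Fin n₂) ℂ) :
    ∃ c : ℂ, c ≠ 0 ∧
      c • A ∈ Matrix.unitaryGroup (Fin n₁) ℂ ∧
      c⁻¹ • B ∈ Matrix.unitaryGroup (Fin n₂) ℂ ∧
      ∃ (U₁ : Matrix (Fin n₁) (Fin n₁) ℂ) (U₂ : Matrix (Fin n₂) (Fin n₂) ℂ),
        U₁ ∈ Matrix.unitaryGroup (Fin n₁) ℂ ∧ U₂ ∈ Matrix.unitaryGroup (Fin n₂) ℂ ∧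
        A ⊗ₖ B = U₁ ⊗ₖ U₂ := by
  have : Nonempty (Fin n₁) := Fin.pos_iff_nonempty.mp hn₁
  have : Nonempty (Fin n₂) := Fin.pos_iff_nonempty.mp hn₂
  exact kronecker_unitary_factors_general hAB
end
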